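/- arXiv:1312.1855 — 6 statements merged into one kernel-verified Lean document; each statement's English description precedes it below -/
import Mathlib

section
/- There exists an injective group homomorphism from the group QAut(T_{2,c}) of quasi-automorphisms of the infinite binary 2-edge-colored tree into Thompson's group V; concretely, there is an injective group homomorphism φ from QAut(T_{2,c}) into the permutation group of the Cantor set C = ℕ → Bool such that for every τ ∈ QAut(T_{2,c}), the permutation φ(τ) is a prefix replacement map. -/
/-!
The tree lives inside the Cantor set: writing each letter `x` of a word `w` as the block `1x` gives
a word `subtreeCode w`, whose cone stands for the subtree hanging at `w`, and inside it the cone of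
`vertexCode w`, which is `subtreeCode w` followed by `0`, stands for the vertex `w` itself. The
vertex cones are pairwise disjoint and cover everything except the points that encode an end of the
tree.

Given `τ ∈ QAut`, let `φ τ` replace the prefix `vertexCode w` by `vertexCode (τ w)` for every `w`,
and `subtreeCode w` by `subtreeCode (τ w)` for all but finitely many `w`. At most one map does this,
because for every level `N` the subtrees hanging at level `N` and the vertices above that level
partition the Cantor set; hence `φ` is a homomorphism. For existence, `τ (u ++ v) = τ u ++ v` once
`u` is longer than every bad vertex, so replacing the prefixes in the partition of a sufficiently
high level treats all longer words correctly. Since distinct vertices have disjoint cones, `φ` is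
injective.
-/

/-- The Cantor set `C = ℕ → Bool`. -/
abbrev Cantor : Type := ℕ → Bool

/-- Prepend a finite word `a` to an element `ξ` of the Cantor set. -/
def prepend (a : List Bool) (ξ : Cantor) : Cantor :=
  fun n => if h : n < a.length then a.get ⟨n, h⟩ else ξ (n - a.length)

/-- A finite set of finite binary words is a complete antichain if distinct elements
are incomparable in the prefix order and every `ξ : ℕ → Bool` has an initial segment
lying in it. -/
def IsCompleteAntichain (A : Set (List Bool)) : Prop :=
  A.Finite ∧
  (∀ a ∈ A, ∀ b ∈ A, a ≠ b → ¬ a <+: b) ∧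
  (∀ ξ : Cantor, ∃ n : ℕ, (List.ofFn fun i : Fin n => ξ i) ∈ A)

/-- A permutation of the Cantor set is a prefix replacement map if it is given by
a bijection between two finite complete antichains of prefixes. -/
def IsPrefixReplacement (g : Equiv.Perm Cantor) : Prop :=
  ∃ A B : Set (List Bool), IsCompleteAntichain A ∧ IsCompleteAntichain B ∧
    ∃ σ : A ≃ B, ∀ (a : A) (ξ : Cantor), g (prepend a ξ) = prepend (σ a : List Bool) ξ

/-- The set of vertices of the tree at which `τ` fails to respect the
(colored) edge relations. -/
def qautBad (τ : Equiv.Perm (List Bool)) : Set (List Bool) :=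
  {w | ∃ x : Bool, τ (w ++ [x]) ≠ (τ w) ++ [x]}

/-- The group `QAut(T_{2,c})` of quasi-automorphisms of the 2-edge-colored infinite
binary tree: permutations of the vertices respecting the edge and color relations
except at finitely many places. -/
def QAut : Subgroup (Equiv.Perm (List Bool)) where
  carrier := {τ | (qautBad τ).Finite}
  one_mem' := by
    have h : qautBad (1 : Equiv.Perm (List Bool)) = ∅ := by
      ext w; simp [qautBad]
    simp only [Set.mem_setOf_eq, h]
    exact Set.finite_empty
  mul_mem' := by
    intro a b ha hb
    refine Set.Finite.subset (Set.Finite.union hb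
      (Set.Finite.preimage b.injective.injOn ha)) ?_
    intro w hw
    obtain ⟨x, hx⟩ := hw
    by_cases h1 : w ∈ qautBad b
    · exact Or.inl h1
    · right
      simp only [Set.mem_preimage]
      simp only [qautBad, Set.mem_setOf_eq, not_exists, not_not] at h1
      refine ⟨x, fun hc => hx ?_⟩
      simp only [Equiv.Perm.coe_mul, Function.comp_apply]
      rw [h1 x, hc]
  inv_mem' := by
    intro a ha
    refine Set.Finite.subset (ha.image a) ?_
    intro w hw
    by_contra hcon
    obtain ⟨x, hx⟩ := hw
    apply hx
    have hu : (a⁻¹ : Equiv.Perm (List Bool)) w ∉ qautBad a := by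
      intro h
      exact hcon ⟨(a⁻¹ : Equiv.Perm (List Bool)) w, h, by simp⟩
    simp only [qautBad, Set.mem_setOf_eq, not_exists, not_not] at hu
    have h1 : a ((a⁻¹ : Equiv.Perm (List Bool)) w ++ [x]) = w ++ [x] := by
      rw [hu x]; simp
    calc (a⁻¹ : Equiv.Perm (List Bool)) (w ++ [x])
        = (a⁻¹ : Equiv.Perm (List Bool)) (a ((a⁻¹ : Equiv.Perm (List Bool)) w ++ [x])) := by
          rw [h1]
      _ = (a⁻¹ : Equiv.Perm (List Bool)) w ++ [x] := by simp

open Filter Function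

@[simp]
lemma prepend_nil (ξ : Cantor) : prepend [] ξ = ξ := by
  funext n
  simp [prepend]

@[simp]
lemma prepend_cons_zero (x : Bool) (a : List Bool) (ξ : Cantor) : prepend (x :: a) ξ 0 = x := by
  simp [prepend]

@[simp]
lemma prepend_cons_succ (x : Bool) (a : List Bool) (ξ : Cantor) (n : ℕ) :
    prepend (x :: a) ξ (n + 1) = prepend a ξ n := by
  simp [prepend]

lemma prepend_append (a b : List Bool) (ξ : Cantor) :
    prepend (a ++ b) ξ = prepend a (prepend b ξ) := by
  induction a with
  | nil => simp
  | cons x a ih =>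
    funext n
    cases n <;> simp [ih]

@[simp]
lemma prepend_cons_inj {x y : Bool} {a b : List Bool} {ξ ζ : Cantor} :
    prepend (x :: a) ξ = prepend (y :: b) ζ ↔ x = y ∧ prepend a ξ = prepend b ζ := by
  constructor
  · intro h
    exact ⟨by simpa using congrFun h 0, funext fun n => by simpa using congrFun h (n + 1)⟩
  · rintro ⟨rfl, h⟩
    funext n
    cases n <;> simp [h]

lemma exists_prepend_singleton (ξ : Cantor) : ∃ x ζ, prepend [x] ζ = ξ :=
  ⟨ξ 0, fun n => ξ (n + 1), by funext n; cases n <;> simp⟩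

lemma ofFn_prepend (a : List Bool) (ξ : Cantor) :
    (List.ofFn fun i : Fin a.length => prepend a ξ i) = a := by
  simp [prepend]

/-- The cones of the words `c i` partition the Cantor set: every point is `prepend (c i) ξ` for a
unique index `i` and a unique `ξ`. -/
def IsConePartition {ι : Type*} (c : ι → List Bool) : Prop :=
  Bijective fun p : ι × Cantor => prepend (c p.1) p.2

namespace IsConePartition

variable {ι : Type*} {c s : ι → List Bool}

lemma eq_of_prefix (hc : IsConePartition c) {i j : ι} (h : c i <+: c j) : i = j := by
  obtain ⟨u, hu⟩ := h
  let ξ : Cantor := fun _ => false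
  have heq : prepend (c i) (prepend u ξ) = prepend (c j) ξ := by rw [← hu, prepend_append]
  exact congrArg Prod.fst (hc.1 (a₁ := (i, prepend u ξ)) (a₂ := (j, ξ)) heq)

lemma injective (hc : IsConePartition c) : Injective c :=
  fun _ _ h => hc.eq_of_prefix (h ▸ List.prefix_rfl)

lemma isCompleteAntichain_range [Finite ι] (hc : IsConePartition c) :
    IsCompleteAntichain (Set.range c) := by
  refine ⟨Set.finite_range c, ?_, fun ξ => ?_⟩
  · rintro _ ⟨i, rfl⟩ _ ⟨j, rfl⟩ hne hprefix
    exact hne (congrArg c (hc.eq_of_prefix hprefix))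
  · obtain ⟨⟨i, ζ⟩, rfl⟩ := hc.2 ξ
    exact ⟨(c i).length, i, (ofFn_prepend _ _).symm⟩

lemma exists_map (hc : IsConePartition c) (s : ι → List Bool) :
    ∃ f : Cantor → Cantor, ∀ i ξ, f (prepend (c i) ξ) = prepend (s i) ξ :=
  ⟨_, fun i ξ => hc.1.extend_apply (fun p => prepend (s p.1) p.2) id (i, ξ)⟩

lemma map_ext {X : Type*} (hc : IsConePartition c) {f g : Cantor → X}
    (h : ∀ i ξ, f (prepend (c i) ξ) = g (prepend (c i) ξ)) : f = g :=
  hc.2.injective_comp_right (funext fun p => h p.1 p.2)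

lemma of_perm (hc : IsConePartition c) {g : Equiv.Perm Cantor}
    (hg : ∀ i ξ, g (prepend (c i) ξ) = prepend (s i) ξ) : IsConePartition s := by
  simpa only [IsConePartition, comp_def, hg] using g.bijective.comp hc

lemma isPrefixReplacement [Finite ι] (hc : IsConePartition c) {g : Equiv.Perm Cantor}
    (hg : ∀ i ξ, g (prepend (c i) ξ) = prepend (s i) ξ) : IsPrefixReplacement g := by
  have hs : IsConePartition s := hc.of_perm hg
  refine ⟨_, _, hc.isCompleteAntichain_range, hs.isCompleteAntichain_range,
    (Equiv.ofInjective c hc.injective).symm.trans (Equiv.ofInjective s hs.injective), ?_⟩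
  rintro ⟨_, i, rfl⟩ ξ
  rw [Equiv.trans_apply, Equiv.ofInjective_symm_apply, Equiv.ofInjective_apply, hg]

end IsConePartition

/-- The word whose cone stands for the subtree hanging at the vertex `w`: each letter `x` of `w`
becomes the block `1x`. -/
def subtreeCode (w : List Bool) : List Bool := w.flatMap fun x => [true, x]

@[simp]
lemma subtreeCode_cons (x : Bool) (w : List Bool) :
    subtreeCode (x :: w) = true :: x :: subtreeCode w := rfl

lemma subtreeCode_append (u v : List Bool) :
    subtreeCode (u ++ v) = subtreeCode u ++ subtreeCode v :=
  List.flatMap_append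

/-- The word whose cone stands for the vertex `w`. The final letter `0` separates it from the
blocks `1x`, which lead to the children of `w`. -/
def vertexCode (w : List Bool) : List Bool := subtreeCode w ++ [false]

@[simp]
lemma vertexCode_nil : vertexCode [] = [false] := rfl

@[simp]
lemma vertexCode_cons (x : Bool) (w : List Bool) :
    vertexCode (x :: w) = true :: x :: vertexCode w := rfl

lemma eq_of_prepend_vertexCode_eq {u v : List Bool} {ξ ζ : Cantor}
    (h : prepend (vertexCode u) ξ = prepend (vertexCode v) ζ) : u = v := by
  induction u generalizing v with
  | nil => cases v <;> simp_all
  | cons x u ih =>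
    cases v with
    | nil => simp at h
    | cons y v =>
      simp only [vertexCode_cons, prepend_cons_inj, true_and] at h
      rw [h.1, ih h.2]

/-- The word that a map `τ` of vertices attaches to the vertex `w` when the tree is cut at level
`N`: the code of the subtree at `τ w` if `w` lies on level `N`, and of the vertex `τ w` alone
otherwise. It is meant for words `w` of length at most `N`. -/
def levelCode (N : ℕ) (τ : List Bool → List Bool) (w : List Bool) : List Bool :=
  if w.length = N then subtreeCode (τ w) else vertexCode (τ w)

lemma levelCode_zero_nil : levelCode 0 id [] = [] := rfl

lemma levelCode_succ_nil (N : ℕ) : levelCode (N + 1) id [] = [false] := rfl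

lemma levelCode_succ_cons (N : ℕ) (x : Bool) (w : List Bool) :
    levelCode (N + 1) id (x :: w) = true :: x :: levelCode N id w := by
  by_cases hw : w.length = N <;> simp [levelCode, hw]

lemma exists_prepend_levelCode (N : ℕ) (ξ : Cantor) :
    ∃ w ζ, w.length ≤ N ∧ prepend (levelCode N id w) ζ = ξ := by
  induction N generalizing ξ with
  | zero => exact ⟨[], ξ, le_rfl, prepend_nil ξ⟩
  | succ N ih =>
    obtain ⟨b, ξ, rfl⟩ := exists_prepend_singleton ξ
    cases b with
    | false => exact ⟨[], ξ, Nat.zero_le _, rfl⟩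
    | true =>
      obtain ⟨x, ξ, rfl⟩ := exists_prepend_singleton ξ
      obtain ⟨w, ζ, hw, rfl⟩ := ih ξ
      exact ⟨x :: w, ζ, Nat.succ_le_succ hw, by simp [levelCode_succ_cons]⟩

lemma eq_and_eq_of_prepend_levelCode_eq {N : ℕ} {u v : List Bool} {ξ ζ : Cantor}
    (hu : u.length ≤ N) (hv : v.length ≤ N)
    (h : prepend (levelCode N id u) ξ = prepend (levelCode N id v) ζ) :
    u = v ∧ ξ = ζ := by
  induction N generalizing u v with
  | zero =>
    obtain rfl := List.length_eq_zero_iff.1 (Nat.le_zero.1 hu)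
    obtain rfl := List.length_eq_zero_iff.1 (Nat.le_zero.1 hv)
    simpa [levelCode_zero_nil] using h
  | succ N ih =>
    cases u <;> cases v <;>
      simp only [levelCode_succ_nil, levelCode_succ_cons, prepend_cons_inj, prepend_nil,
        true_and, reduceCtorEq, false_and] at h
    case nil.nil => exact ⟨rfl, h⟩
    case cons.cons =>
      obtain ⟨rfl, h⟩ := h
      obtain ⟨rfl, rfl⟩ := ih (Nat.le_of_succ_le_succ hu) (Nat.le_of_succ_le_succ hv) h
      exact ⟨rfl, rfl⟩

lemma isConePartition_levelCode (N : ℕ) :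
    IsConePartition fun w : {w : List Bool // w.length ≤ N} => levelCode N id w := by
  constructor
  · rintro ⟨⟨u, hu⟩, ξ⟩ ⟨⟨v, hv⟩, ζ⟩ h
    obtain ⟨rfl, rfl⟩ := eq_and_eq_of_prepend_levelCode_eq hu hv h
    rfl
  · intro ξ
    obtain ⟨w, ζ, hw, h⟩ := exists_prepend_levelCode N ξ
    exact ⟨(⟨w, hw⟩, ζ), h⟩

lemma cofinite_list_eq_comap_length (α : Type*) [Finite α] :
    (cofinite : Filter (List α)) = comap List.length atTop := by
  rw [← Nat.cofinite_eq_atTop]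
  exact le_antisymm
    (Tendsto.cofinite_of_finite_preimage_singleton fun n => List.finite_length_eq α n).le_comap
    (comap_cofinite_le _)

/-- The map `f` of the Cantor set represents the map `τ` of vertices: it carries the cone of each
vertex `w` to that of `τ w`, and for almost all `w` even the whole subtree at `w` to the one at
`τ w`. -/
structure Represents (τ : List Bool → List Bool) (f : Cantor → Cantor) : Prop where
  map_vertex : ∀ w ζ, f (prepend (vertexCode w) ζ) = prepend (vertexCode (τ w)) ζ
  map_subtree : ∀ᶠ w in cofinite, ∀ ζ, f (prepend (subtreeCode w) ζ) = prepend (subtreeCode (τ w)) ζ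

namespace Represents

variable {τ σ : List Bool → List Bool} {f g : Cantor → Cantor}

lemma eventually_map_levelCode (h : Represents τ f) :
    ∀ᶠ N in atTop, ∀ w ζ, f (prepend (levelCode N id w) ζ) = prepend (levelCode N τ w) ζ := by
  have hsubtree := h.map_subtree
  rw [cofinite_list_eq_comap_length, eventually_comap] at hsubtree
  filter_upwards [hsubtree] with N hN w ζ
  unfold levelCode
  split_ifs with hw
  · exact hN w hw ζ
  · exact h.map_vertex w ζ

lemma map_unique (hf : Represents τ f) (hg : Represents τ g) : f = g := by
  obtain ⟨N, hfN, hgN⟩ := (hf.eventually_map_levelCode.and hg.eventually_map_levelCode).exists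
  exact (isConePartition_levelCode N).map_ext fun w ζ => (hfN w ζ).trans (hgN w ζ).symm

lemma vertexMap_unique (hτ : Represents τ f) (hσ : Represents σ f) : τ = σ := by
  funext w
  let ζ : Cantor := fun _ => false
  exact eq_of_prepend_vertexCode_eq ((hτ.map_vertex w ζ).symm.trans (hσ.map_vertex w ζ))

protected lemma id : Represents id id :=
  ⟨fun _ _ => rfl, Eventually.of_forall fun _ _ => rfl⟩

protected lemma comp (hf : Represents τ f) (hg : Represents σ g) (hσ : Injective σ) :
    Represents (τ ∘ σ) (f ∘ g) where
  map_vertex w ζ := by simp only [comp_apply, hg.map_vertex, hf.map_vertex]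
  map_subtree := by
    filter_upwards [hg.map_subtree, hσ.tendsto_cofinite.eventually hf.map_subtree] with w hgw hfw ζ
    simp only [comp_apply, hgw, hfw]

end Represents

lemma apply_append_of_notMem_qautBad {τ : Equiv.Perm (List Bool)} {u : List Bool}
    (hu : ∀ v, u ++ v ∉ qautBad τ) (v : List Bool) : τ (u ++ v) = τ u ++ v := by
  induction v using List.reverseRecOn with
  | nil => simp
  | append_singleton v x ih =>
    have hgood : τ (u ++ v ++ [x]) = τ (u ++ v) ++ [x] := by
      by_contra hne
      exact hu v ⟨x, hne⟩
    rw [← List.append_assoc, hgood, ih, List.append_assoc]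

namespace QAut

lemma exists_apply_append (τ : QAut) :
    ∃ N, ∀ u : List Bool, N ≤ u.length → ∀ v, τ.1 (u ++ v) = τ.1 u ++ v := by
  have hgood : ∀ᶠ w in cofinite, w ∉ qautBad τ.1 := Set.Finite.eventually_cofinite_notMem τ.2
  rw [cofinite_list_eq_comap_length, eventually_comap, eventually_atTop] at hgood
  obtain ⟨N, hN⟩ := hgood
  exact ⟨N, fun u hu => apply_append_of_notMem_qautBad fun v =>
    hN _ (hu.trans (by simp)) (u ++ v) rfl⟩

lemma exists_represents (τ : QAut) : ∃ f, Represents τ.1 f := by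
  obtain ⟨N, hN⟩ := exists_apply_append τ
  obtain ⟨f, hf⟩ := (isConePartition_levelCode N).exists_map fun w => levelCode N τ.1 w
  have hlevel (w : List Bool) (hw : w.length = N) (ζ : Cantor) :
      f (prepend (subtreeCode w) ζ) = prepend (subtreeCode (τ.1 w)) ζ := by
    simpa [levelCode, hw] using hf ⟨w, hw.le⟩ ζ
  have hbelow (w : List Bool) (hw : N ≤ w.length) (ζ : Cantor) :
      f (prepend (subtreeCode w) ζ) = prepend (subtreeCode (τ.1 w)) ζ := by
    obtain ⟨u, v, rfl, hu⟩ : ∃ u v, w = u ++ v ∧ u.length = N :=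
      ⟨w.take N, w.drop N, (List.take_append_drop N w).symm, List.length_take_of_le hw⟩
    simp only [hN u hu.ge, subtreeCode_append, prepend_append, hlevel u hu]
  refine ⟨f, fun w ζ => ?_, ?_⟩
  · obtain hw | hw := lt_or_ge w.length N
    · simpa [levelCode, hw.ne] using hf ⟨w, hw.le⟩ ζ
    · simp only [vertexCode, prepend_append, hbelow w hw]
  · rw [cofinite_list_eq_comap_length]
    filter_upwards [tendsto_comap.eventually_ge_atTop N] with w hw using hbelow w hw

/-- The action of `QAut` on the Cantor set, as a homomorphism to the monoid of self-maps: `τ` acts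
by the map that represents it. -/
noncomputable def toCantorEnd : QAut →* Function.End Cantor where
  toFun τ := (exists_represents τ).choose
  map_one' := (exists_represents 1).choose_spec.map_unique Represents.id
  map_mul' τ σ := (exists_represents (τ * σ)).choose_spec.map_unique
    ((exists_represents τ).choose_spec.comp (exists_represents σ).choose_spec σ.1.injective)

/-- The action of `QAut` on the Cantor set by permutations. -/
noncomputable def toCantorPerm : QAut →* Equiv.Perm Cantor := toCantorEnd.toHomPerm

lemma represents_toCantorPerm (τ : QAut) : Represents τ.1 (toCantorPerm τ) :=
  (exists_represents τ).choose_spec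

lemma toCantorPerm_injective : Injective toCantorPerm := by
  intro τ σ h
  have hσ : Represents σ.1 (toCantorPerm τ) := h ▸ represents_toCantorPerm σ
  exact Subtype.ext (DFunLike.coe_injective ((represents_toCantorPerm τ).vertexMap_unique hσ))

lemma isPrefixReplacement_toCantorPerm (τ : QAut) : IsPrefixReplacement (toCantorPerm τ) := by
  obtain ⟨N, hN⟩ := (represents_toCantorPerm τ).eventually_map_levelCode.exists
  have : Finite {w : List Bool // w.length ≤ N} := (List.finite_length_le Bool N).to_subtype
  exact (isConePartition_levelCode N).isPrefixReplacement fun w => hN w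

end QAut

/-- There is an injective group homomorphism from `QAut(T_{2,c})` into Thompson's
group `V`: an injective homomorphism into the permutation group of the Cantor set
all of whose values are prefix replacement maps. -/
theorem qaut_embeds_in_V :
    ∃ φ : QAut →* Equiv.Perm Cantor,
      Function.Injective φ ∧ ∀ τ : QAut, IsPrefixReplacement (φ τ) :=
  ⟨QAut.toCantorPerm, QAut.toCantorPerm_injective, QAut.isPrefixReplacement_toCantorPerm⟩
end

section
/- Let τ be an element of QAut(T_{2,c}). For each word w : List Bool, let s_w be the longest common suffix of w and τ w, and write w = x_w ++ s_w and τ w = y_w ++ s_w. Then the set Γ_τ = {(x_w, y_w) | w : List Bool} is finite. -/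
section

variable {α : Type*}

/-- The edges of the tree of words over `α` that `f` does not respect, the edge from `w` to its
child `w ++ [x]` being encoded as the pair `(w, x)`. -/
def brokenEdges (f : List α → List α) : Set (List α × α) :=
  {e | f (e.1 ++ [e.2]) ≠ f e.1 ++ [e.2]}

/-- The words whose image under `f` is not determined by the image of their parent: the root and
the lower endpoints of the broken edges. -/
def exceptionalWords (f : List α → List α) : Set (List α) :=
  insert [] ((fun e => e.1 ++ [e.2]) '' brokenEdges f)

lemma exists_mem_exceptionalWords_append (f : List α → List α) (w : List α) :
    ∃ u ∈ exceptionalWords f, ∃ t, w = u ++ t ∧ f w = f u ++ t := by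
  induction w using List.reverseRecOn with
  | nil => exact ⟨[], Set.mem_insert _ _, [], rfl, (List.append_nil _).symm⟩
  | append_singleton w x ih =>
    by_cases hx : f (w ++ [x]) = f w ++ [x]
    · obtain ⟨u, hu, t, hw, hfw⟩ := ih
      refine ⟨u, hu, t ++ [x], ?_, ?_⟩
      · rw [← List.append_assoc, ← hw]
      · rw [hx, hfw, List.append_assoc]
    · have hwx : w ++ [x] ∈ exceptionalWords f :=
        Set.mem_insert_of_mem _ ⟨(w, x), hx, rfl⟩
      exact ⟨w ++ [x], hwx, [], (List.append_nil _).symm, (List.append_nil _).symm⟩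

lemma isPrefix_of_append_eq_append {p s u t : List α} (h : p ++ s = u ++ t)
    (hts : t.length ≤ s.length) : p <+: u := by
  have hlen : p.length + s.length = u.length + t.length := by
    simpa only [List.length_append] using congrArg List.length h
  exact List.prefix_of_prefix_length_le (List.prefix_append p s)
    (h ▸ List.prefix_append u t) (by lia)

lemma finite_setOf_isPrefix (u : List α) : {p | p <+: u}.Finite := by
  simpa only [List.mem_inits] using u.inits.finite_toSet

theorem gamma_finite_general (f : List α → List α) (hf : (brokenEdges f).Finite) :
    {p : List α × List α |
      ∃ w s : List α, w = p.1 ++ s ∧ f w = p.2 ++ s ∧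
        ∀ s' : List α, s' <:+ w → s' <:+ f w → s'.length ≤ s.length}.Finite := by
  have hexc : (exceptionalWords f).Finite := (hf.image _).insert []
  refine (hexc.biUnion fun u _ =>
    (finite_setOf_isPrefix u).prod (finite_setOf_isPrefix (f u))).subset ?_
  rintro ⟨x, y⟩ ⟨w, s, hw, hfw, hmax⟩
  obtain ⟨u, hu, t, hut, hfut⟩ := exists_mem_exceptionalWords_append f w
  have hts : t.length ≤ s.length := hmax t ⟨u, hut.symm⟩ ⟨f u, hfut.symm⟩
  have hxu : x <+: u := isPrefix_of_append_eq_append (hw.symm.trans hut) hts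
  have hyu : y <+: f u := isPrefix_of_append_eq_append (hfw.symm.trans hfut) hts
  exact Set.mem_biUnion hu ⟨hxu, hyu⟩

end

lemma finite_brokenEdges_of_mem_QAut {τ : Equiv.Perm (List Bool)} (hτ : τ ∈ QAut) :
    (brokenEdges τ).Finite :=
  have hbad : (qautBad τ).Finite := hτ
  (hbad.prod Set.finite_univ).subset fun e he => ⟨⟨e.2, he⟩, Set.mem_univ e.2⟩

/-- For `τ ∈ QAut(T_{2,c})`, write each `w` as `w = x_w ++ s_w` and
`τ w = y_w ++ s_w` where `s_w` is the longest common suffix of `w` and `τ w`.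
Then the set `Γ_τ` of pairs `(x_w, y_w)` is finite. -/
theorem gamma_finite (τ : Equiv.Perm (List Bool)) (hτ : τ ∈ QAut) :
    {p : List Bool × List Bool |
      ∃ w s : List Bool, w = p.1 ++ s ∧ τ w = p.2 ++ s ∧
        ∀ s' : List Bool, s' <:+ w → s' <:+ τ w → s'.length ≤ s.length}.Finite :=
  gamma_finite_general τ (finite_brokenEdges_of_mem_QAut hτ)
end

section
/- Let τ be an element of QAut(T_{2,c}). Then there exists k ∈ ℕ such that for every word w : List Bool with length at least k and every word λ : List Bool, τ (w ++ λ) = (τ w) ++ λ. (This is the core of the disjoint decomposition: beneath level k, τ acts as an element of Thompson's group V.) -/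
theorem apply_append_of_forall_prefix {α : Type*} {f : List α → List α} {w : List α}
    (hf : ∀ v, w <+: v → ∀ x, f (v ++ [x]) = f v ++ [x]) (l : List α) :
    f (w ++ l) = f w ++ l := by
  induction l using List.reverseRecOn with
  | nil => simp
  | append_singleton l x ih =>
    calc f (w ++ (l ++ [x])) = f (w ++ l ++ [x]) := by rw [List.append_assoc]
      _ = f (w ++ l) ++ [x] := hf _ (List.prefix_append w l) x
      _ = f w ++ (l ++ [x]) := by rw [ih, List.append_assoc]

theorem qaut_eventually_prefix_general {α : Type*} {f : List α → List α}
    (hf : BddAbove (List.length '' {w | ∃ x, f (w ++ [x]) ≠ f w ++ [x]})) :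
    ∃ k : ℕ, ∀ w : List α, k ≤ w.length → ∀ l : List α, f (w ++ l) = f w ++ l := by
  obtain ⟨m, hm⟩ := hf
  refine ⟨m + 1, fun w hw => apply_append_of_forall_prefix fun v hwv x => ?_⟩
  by_contra hbad
  have hv_le : v.length ≤ m := hm (Set.mem_image_of_mem List.length ⟨x, hbad⟩)
  have hw_le : w.length ≤ v.length := hwv.length_le
  omega

/-- For every `τ ∈ QAut(T_{2,c})` there is a level `k` beneath which `τ` acts by
appending: `τ (w ++ λ) = (τ w) ++ λ` for all `w` of length at least `k` and all `λ`. -/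
theorem qaut_eventually_prefix (τ : Equiv.Perm (List Bool)) (hτ : τ ∈ QAut) :
    ∃ k : ℕ, ∀ w : List Bool, k ≤ w.length →
      ∀ lam : List Bool, τ (w ++ lam) = (τ w) ++ lam := by
  have hfin : (qautBad τ).Finite := hτ
  exact qaut_eventually_prefix_general (hfin.image List.length).bddAbove
end

section
/- Let τ be an element of QAut(T_{2,c}) and let k ∈ ℕ be such that for every word w : List Bool of length at least k and every x : Bool, τ (w ++ [x]) = (τ w) ++ [x]. Then the image set {τ w | w : List Bool, length w = k} is a finite complete antichain: distinct elements of this set are incomparable in the prefix order, and every ξ : ℕ → Bool has an initial segment lying in this set. -/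
/-!
From level `k` on, `τ` commutes with appending words. Hence `τ u <+: τ v` forces `u <+: v` as soon
as `k ≤ |u|`, so the images of distinct words of length `k` are incomparable.

Given `ξ`, only finitely many words are shorter than `k`, so the `τ`-preimage `w` of some initial
segment of `ξ` has length at least `k`. Then `τ (w.take k)` is a prefix of `τ w`, hence an initial
segment of `ξ`.
-/

section Words

variable {α : Type*}

theorem eq_ofFn_of_prefix_ofFn {ξ : ℕ → α} {n : ℕ} {a : List α}
    (h : a <+: List.ofFn fun i : Fin n => ξ i) : a = List.ofFn fun i : Fin a.length => ξ i := by
  have hlen : a.length ≤ n := by simpa using h.length_le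
  calc
    a = (List.ofFn fun i : Fin n => ξ i).take a.length := List.prefix_iff_eq_take.mp h
    _ = List.ofFn fun i : Fin a.length => ξ i := (Fin.ofFn_take_eq_take_ofFn hlen _).symm

theorem injective_ofFn_initialSegment (ξ : ℕ → α) :
    Function.Injective fun n : ℕ => List.ofFn fun i : Fin n => ξ i :=
  fun m n h => by simpa using congrArg List.length h

theorem exists_le_length_of_injective [Finite α] {ι : Type*} [Infinite ι] {s : ι → List α}
    (hs : Function.Injective s) (k : ℕ) : ∃ i, k ≤ (s i).length := by
  by_contra! hshort
  exact Set.infinite_of_injective_forall_mem hs hshort (List.finite_length_lt α k)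

end Words

/-- The map `τ` respects the coloured child relation of the tree of words over `α` at every vertex
of level at least `k`, where the child of `w` along the edge of colour `x` is `w ++ [x]`. -/
def PreservesChildrenFrom {α : Type*} (τ : List α → List α) (k : ℕ) : Prop :=
  ∀ w : List α, k ≤ w.length → ∀ x : α, τ (w ++ [x]) = τ w ++ [x]

namespace PreservesChildrenFrom

variable {α : Type*} {τ : List α → List α} {k : ℕ}

theorem map_append (hk : PreservesChildrenFrom τ k) {u : List α} (hu : k ≤ u.length)
    (s : List α) : τ (u ++ s) = τ u ++ s := by
  induction s using List.reverseRecOn with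
  | nil => simp
  | append_singleton s x ih =>
    have hus : k ≤ (u ++ s).length := by rw [List.length_append]; omega
    rw [← List.append_assoc, hk _ hus, ih, List.append_assoc]

theorem map_prefix_map (hk : PreservesChildrenFrom τ k) {u v : List α} (hu : k ≤ u.length)
    (huv : u <+: v) : τ u <+: τ v := by
  obtain ⟨s, rfl⟩ := huv
  exact ⟨s, (hk.map_append hu s).symm⟩

theorem prefix_of_map_prefix_map (hk : PreservesChildrenFrom τ k) (hτ : Function.Injective τ)
    {u v : List α} (hu : k ≤ u.length) (huv : τ u <+: τ v) : u <+: v := by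
  obtain ⟨s, hs⟩ := huv
  exact ⟨s, hτ ((hk.map_append hu s).trans hs)⟩

theorem isAntichain_prefix_image_level (hk : PreservesChildrenFrom τ k)
    (hτ : Function.Injective τ) :
    IsAntichain (· <+: ·) (τ '' {w : List α | w.length = k}) := by
  rintro _ ⟨u, hu, rfl⟩ _ ⟨v, hv, rfl⟩ hne hpre
  have huv : u <+: v := hk.prefix_of_map_prefix_map hτ hu.ge hpre
  exact hne (congrArg τ (huv.eq_of_length (hu.trans hv.symm)))

theorem exists_ofFn_mem_image_level [Finite α] (hk : PreservesChildrenFrom τ k)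
    (hτ : Function.Surjective τ) (ξ : ℕ → α) :
    ∃ n : ℕ, (List.ofFn fun i : Fin n => ξ i) ∈ τ '' {w : List α | w.length = k} := by
  obtain ⟨n, hn⟩ := exists_le_length_of_injective
    ((Function.injective_surjInv hτ).comp (injective_ofFn_initialSegment ξ)) k
  obtain ⟨w, hw, hkw⟩ : ∃ w, τ w = (List.ofFn fun i : Fin n => ξ i) ∧ k ≤ w.length :=
    ⟨_, Function.surjInv_eq hτ _, hn⟩
  have htake : (w.take k).length = k := List.length_take_of_le hkw
  have hpre : τ (w.take k) <+: List.ofFn fun i : Fin n => ξ i :=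
    hw ▸ hk.map_prefix_map htake.ge (List.take_prefix k w)
  exact ⟨_, w.take k, htake, eq_ofFn_of_prefix_ofFn hpre⟩

end PreservesChildrenFrom

theorem qaut_image_level_is_antichain_general {α : Type*} [Finite α]
    (τ : Equiv.Perm (List α)) (k : ℕ) (hk : PreservesChildrenFrom τ k) :
    (τ '' {w : List α | w.length = k}).Finite ∧
      IsAntichain (· <+: ·) (τ '' {w : List α | w.length = k}) ∧
      ∀ ξ : ℕ → α, ∃ n : ℕ,
        (List.ofFn fun i : Fin n => ξ i) ∈ τ '' {w : List α | w.length = k} :=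
  ⟨(List.finite_length_eq α k).image τ, hk.isAntichain_prefix_image_level τ.injective,
    hk.exists_ofFn_mem_image_level τ.surjective⟩

/-- If `τ ∈ QAut(T_{2,c})` respects the child relation at every vertex of length at
least `k`, then the image of the set of words of length `k` under `τ` is a finite
complete antichain. -/
theorem qaut_image_level_is_antichain (τ : Equiv.Perm (List Bool)) (hτ : τ ∈ QAut)
    (k : ℕ) (hk : ∀ w : List Bool, k ≤ w.length →
      ∀ x : Bool, τ (w ++ [x]) = (τ w) ++ [x]) :
    IsCompleteAntichain (τ '' {w : List Bool | w.length = k}) := by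
  obtain ⟨hfin, hanti, hcomplete⟩ := qaut_image_level_is_antichain_general τ k hk
  exact ⟨hfin, fun _ ha _ hb hne => hanti ha hb hne, hcomplete⟩
end

section
/- Let m ≥ 1 be an integer and let e ∈ {1, -1}. Then there is an injective group homomorphism from the Baumslag–Solitar group BS(m, e·m) into the direct product ((ℤ/mℤ) ∗ ℤ) × (ℤ ⋊_φ ℤ), where (ℤ/mℤ) ∗ ℤ is the free product of the cyclic group of order m and the infinite cyclic group, and ℤ ⋊_φ ℤ is the semidirect product in which the generator of the acting copy of ℤ acts on ℤ by multiplication by e. The homomorphism is the pair consisting of the quotient by the normal closure of aᵐ and the map sending a ↦ a', b ↦ b' to the images of the generators of BS(1,e) ≅ ℤ ⋊_φ ℤ. -/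
/-!
The map to `(ℤ/mℤ) ∗ ℤ` is the quotient by the normal closure of `aᵐ`. In `BS(m, ±m)` the subgroup
generated by `aᵐ` is already normal, because `b` conjugates `aᵐ` to `a^{±m}`; so the kernel consists
of powers of `a`. The map to `ℤ ⋊ ℤ` sends `a` to an element of infinite order, hence kills no
nontrivial power of `a`, and the two kernels meet trivially.
-/

/-- The single Baumslag–Solitar relator `b⁻¹ aᵐ b (aⁿ)⁻¹` in the free group on two
generators (`0 ↦ a`, `1 ↦ b`). -/
def bsRels (m n : ℤ) : Set (FreeGroup (Fin 2)) :=
  {(FreeGroup.of 1)⁻¹ * (FreeGroup.of 0) ^ m * FreeGroup.of 1 * ((FreeGroup.of 0) ^ n)⁻¹}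

/-- The Baumslag–Solitar group `BS(m,n) = ⟨a, b ∣ b⁻¹ aᵐ b = aⁿ⟩`. -/
abbrev BS (m n : ℤ) : Type := PresentedGroup (bsRels m n)

/-- The generator `a` of `BS(m,n)`. -/
def BS.a (m n : ℤ) : BS m n := PresentedGroup.of 0

/-- The generator `b` of `BS(m,n)`. -/
def BS.b (m n : ℤ) : BS m n := PresentedGroup.of 1

/-- The homomorphism `ℤ/mℤ → G` that sends the generator to an element `x` with `xᵐ = 1`. -/
def zmodPowersHom {G : Type*} [Group G] (m : ℕ) (x : G) (hx : x ^ m = 1) :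
    Multiplicative (ZMod m) →* G :=
  AddMonoidHom.toMultiplicativeLeft <|
    ZMod.lift m ⟨zmultiplesHom (Additive G) (.ofMul x), by simpa [← ofMul_pow] using hx⟩

@[simp]
theorem zmodPowersHom_ofAdd_one {G : Type*} [Group G] (m : ℕ) (x : G) (hx : x ^ m = 1) :
    zmodPowersHom m x hx (.ofAdd 1) = x := by
  rw [zmodPowersHom, AddMonoidHom.toMultiplicativeLeft_apply_apply, toAdd_ofAdd, ← Int.cast_one,
    ZMod.lift_coe]
  simp

theorem ofAdd_one_zmod_pow (m : ℕ) : Multiplicative.ofAdd (1 : ZMod m) ^ m = 1 := by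
  simp [← ofAdd_nsmul]

theorem monoidHom_ext_multiplicative_zmod {M : Type*} [Monoid M] {m : ℕ}
    {f g : Multiplicative (ZMod m) →* M} (h : f (.ofAdd 1) = g (.ofAdd 1)) : f = g := by
  let q : Multiplicative ℤ →* Multiplicative (ZMod m) :=
    AddMonoidHom.toMultiplicative (Int.castAddHom (ZMod m))
  have hq : Function.Surjective q := ZMod.intCast_surjective
  refine (MonoidHom.cancel_right hq).mp (MonoidHom.ext_mint ?_)
  simpa [q] using h

theorem normal_zpowers_of_closure_eq_top {G : Type*} [Group G] {S : Set G} {c : G}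
    (hS : Subgroup.closure S = ⊤)
    (hc : ∀ s ∈ S, Subgroup.zpowers (s⁻¹ * c * s) = Subgroup.zpowers c) :
    (Subgroup.zpowers c).Normal := by
  rw [← Subgroup.normalizer_eq_top_iff, eq_top_iff, ← hS, Subgroup.closure_le]
  intro s hs
  rw [SetLike.mem_coe, ← inv_mem_iff, Subgroup.mem_normalizer_iff_map_conj_eq,
    MonoidHom.map_zpowers]
  simpa using hc s hs

theorem disjoint_zpowers_ker {G H : Type*} [Group G] [Group H] (f : G →* H) {x : G}
    (hx : ¬IsOfFinOrder (f x)) : Disjoint (Subgroup.zpowers x) f.ker := by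
  rw [Subgroup.disjoint_def]
  rintro _ ⟨k, rfl⟩ hk
  have hk' : f x ^ k = f x ^ (0 : ℤ) := by simpa [MonoidHom.mem_ker] using hk
  simp [injective_zpow_iff_not_isOfFinOrder.mpr hx hk']

namespace BS

section Presentation

variable {m n : ℤ} {G : Type*} [Group G]

theorem b_inv_mul_a_zpow_mul_b : (b m n)⁻¹ * a m n ^ m * b m n = a m n ^ n := by
  have h := PresentedGroup.one_of_mem (rels := bsRels m n) rfl
  simp only [map_mul, map_inv, map_zpow] at h
  exact mul_inv_eq_one.mp h

theorem closure_a_b : Subgroup.closure {a m n, b m n} = ⊤ := by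
  have hrange : Set.range (PresentedGroup.of (rels := bsRels m n)) = {a m n, b m n} := by
    ext x
    simp [Fin.exists_fin_two, a, b, eq_comm]
  rw [← hrange, PresentedGroup.closure_range_of]

theorem hom_ext {f g : BS m n →* G} (ha : f (a m n) = g (a m n)) (hb : f (b m n) = g (b m n)) :
    f = g :=
  PresentedGroup.ext (Fin.forall_fin_two.mpr ⟨ha, hb⟩)

/-- The universal property of `BS(m,n)`: a pair satisfying the defining relation extends to a
homomorphism. -/
def lift (x y : G) (h : y⁻¹ * x ^ m * y = x ^ n) : BS m n →* G :=
  PresentedGroup.toGroup (f := ![x, y]) (by rintro _ rfl; simp [h])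

@[simp]
theorem lift_a (x y : G) (h : y⁻¹ * x ^ m * y = x ^ n) : lift x y h (a m n) = x :=
  PresentedGroup.toGroup.of _

@[simp]
theorem lift_b (x y : G) (h : y⁻¹ * x ^ m * y = x ^ n) : lift x y h (b m n) = y :=
  PresentedGroup.toGroup.of _

theorem normal_zpowers_a_zpow (h : n = m ∨ n = -m) :
    (Subgroup.zpowers (a m n ^ m)).Normal := by
  refine normal_zpowers_of_closure_eq_top closure_a_b ?_
  rintro _ (rfl | rfl)
  · rw [((Commute.refl (a m n)).zpow_right m).inv_mul_cancel]
  · rw [b_inv_mul_a_zpow_mul_b]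
    rcases h with h | h <;> simp [h]

theorem normalClosure_a_zpow_le_zpowers_a (h : n = m ∨ n = -m) :
    Subgroup.normalClosure {a m n ^ m} ≤ Subgroup.zpowers (a m n) := by
  have := normal_zpowers_a_zpow h
  calc
    Subgroup.normalClosure {a m n ^ m} ≤ Subgroup.zpowers (a m n ^ m) :=
      Subgroup.normalClosure_le_normal (Set.singleton_subset_iff.mpr (Subgroup.mem_zpowers _))
    _ ≤ Subgroup.zpowers (a m n) := Subgroup.zpowers_le.mpr (Subgroup.zpow_mem_zpowers _ _)

section SemidirectProduct

variable {N : Type*} [Group N] (φ : G →* MulAut N) (x : N) (g : G)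

/-- The homomorphism `BS(m,n) → N ⋊ G` that sends `a` to `x : N` and `b` to `g : G`, defined when
`g` acts on `N` with `xⁿ ↦ xᵐ`. -/
def toSemidirectProduct (h : φ g (x ^ n) = x ^ m) : BS m n →* N ⋊[φ] G :=
  lift (.inl x) (.inr g) <| by
    rw [← map_zpow, ← map_zpow, ← map_inv, ← SemidirectProduct.inl_aut_inv, ← h,
      MulAut.inv_apply_self]

@[simp]
theorem toSemidirectProduct_a (h : φ g (x ^ n) = x ^ m) :
    toSemidirectProduct φ x g h (a m n) = .inl x :=
  lift_a ..

@[simp]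
theorem toSemidirectProduct_b (h : φ g (x ^ n) = x ^ m) :
    toSemidirectProduct φ x g h (b m n) = .inr g :=
  lift_b ..

end SemidirectProduct

end Presentation

section Quotient

variable {m : ℕ} {n : ℤ}

/-- The homomorphism `BS(m,n) → ℤ/mℤ ∗ ℤ` that sends `a` and `b` to the generators of the two free
factors. -/
def toCoprod (h : (m : ℤ) ∣ n) :
    BS m n →* Monoid.Coprod (Multiplicative (ZMod m)) (Multiplicative ℤ) :=
  lift (.inl (.ofAdd 1)) (.inr (.ofAdd 1)) <| by
    obtain ⟨k, rfl⟩ := h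
    simp [zpow_mul, ← map_pow, ofAdd_one_zmod_pow]

@[simp]
theorem toCoprod_a (h : (m : ℤ) ∣ n) : toCoprod h (a m n) = .inl (.ofAdd 1) :=
  lift_a ..

@[simp]
theorem toCoprod_b (h : (m : ℤ) ∣ n) : toCoprod h (b m n) = .inr (.ofAdd 1) :=
  lift_b ..

theorem toCoprod_a_pow (h : (m : ℤ) ∣ n) : toCoprod h (a m n ^ m) = 1 := by
  rw [map_pow, toCoprod_a, ← map_pow, ofAdd_one_zmod_pow, map_one]

/-- The homomorphism from `ℤ/mℤ ∗ ℤ` to the quotient of `BS(m,n)` by the normal closure of `aᵐ`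
that sends the generators of the two free factors to the classes of `a` and `b`. -/
def coprodToQuotient (m : ℕ) (n : ℤ) :
    Monoid.Coprod (Multiplicative (ZMod m)) (Multiplicative ℤ) →*
      BS m n ⧸ Subgroup.normalClosure {a m n ^ m} :=
  Monoid.Coprod.lift
    (zmodPowersHom m (a m n) <| (QuotientGroup.eq_one_iff _).mpr <|
      Subgroup.subset_normalClosure rfl)
    (zpowersHom _ (b m n))

@[simp]
theorem coprodToQuotient_inl_ofAdd_one : coprodToQuotient m n (.inl (.ofAdd 1)) = a m n :=
  (Monoid.Coprod.lift_apply_inl ..).trans (zmodPowersHom_ofAdd_one ..)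

@[simp]
theorem coprodToQuotient_inr_ofAdd_one : coprodToQuotient m n (.inr (.ofAdd 1)) = b m n := by
  simp [coprodToQuotient]

/-- For `m ∣ n`, the quotient of `BS(m,n)` by the normal closure of `aᵐ` is `ℤ/mℤ ∗ ℤ`. -/
def quotientEquivCoprod (h : (m : ℤ) ∣ n) :
    BS m n ⧸ Subgroup.normalClosure {a m n ^ m} ≃*
      Monoid.Coprod (Multiplicative (ZMod m)) (Multiplicative ℤ) :=
  MonoidHom.toMulEquiv
    (QuotientGroup.lift _ (toCoprod h) <| Subgroup.normalClosure_le_normal <|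
      Set.singleton_subset_iff.mpr (toCoprod_a_pow h))
    (coprodToQuotient m n)
    (QuotientGroup.monoidHom_ext _ <| hom_ext (by simp) (by simp))
    (Monoid.Coprod.hom_ext
      (monoidHom_ext_multiplicative_zmod <| by simp)
      (MonoidHom.ext_mint <| by simp))

theorem toCoprod_surjective (h : (m : ℤ) ∣ n) : Function.Surjective (toCoprod h) :=
  (quotientEquivCoprod h).surjective.comp (QuotientGroup.mk'_surjective _)

theorem ker_toCoprod (h : (m : ℤ) ∣ n) :
    (toCoprod h).ker = Subgroup.normalClosure {a m n ^ m} :=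
  (MonoidHom.ker_mulEquiv_comp (QuotientGroup.mk' _) (quotientEquivCoprod h)).trans
    (QuotientGroup.ker_mk' _)

end Quotient

end BS

/-- For `m ≥ 1` and `e ∈ {1, -1}`, the group `BS(m, e·m)` embeds into
`((ℤ/mℤ) ∗ ℤ) × (ℤ ⋊_φ ℤ)`, where the generator of the acting copy of `ℤ` acts on
`ℤ` by multiplication by `e`; the embedding is the pair consisting of the quotient by
the normal closure of `aᵐ` and the map sending the generators `a, b` to the generators
of `ℤ ⋊_φ ℤ ≅ BS(1,e)`. -/
theorem BS_m_em_embeds_in_product (m : ℕ) (hm : 1 ≤ m) (e : ℤ) (he : e = 1 ∨ e = -1)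
    (φ : Multiplicative ℤ →* MulAut (Multiplicative ℤ))
    (hφ : ∀ x : Multiplicative ℤ, φ (Multiplicative.ofAdd 1) x = x ^ e) :
    ∃ (f₁ : BS m (e * m) →* Monoid.Coprod (Multiplicative (ZMod m)) (Multiplicative ℤ))
      (f₂ : BS m (e * m) →* Multiplicative ℤ ⋊[φ] Multiplicative ℤ),
      Function.Surjective f₁ ∧
      MonoidHom.ker f₁ = Subgroup.normalClosure {(BS.a m (e * m)) ^ m} ∧
      f₂ (BS.a m (e * m)) = SemidirectProduct.inl (Multiplicative.ofAdd 1) ∧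
      f₂ (BS.b m (e * m)) = SemidirectProduct.inr (Multiplicative.ofAdd 1) ∧
      Function.Injective (f₁.prod f₂) := by
  have hφ_pow : φ (.ofAdd 1) (.ofAdd 1 ^ (e * m)) = .ofAdd 1 ^ (m : ℤ) := by
    rw [hφ, ← zpow_mul]
    rcases he with rfl | rfl <;> simp
  have hn : e * m = m ∨ e * m = -m := by
    rcases he with rfl | rfl <;> simp
  let f₁ := BS.toCoprod (dvd_mul_left (m : ℤ) e)
  let f₂ := BS.toSemidirectProduct φ (.ofAdd 1) (.ofAdd 1) hφ_pow
  have hf₂a : f₂ (BS.a m (e * m)) = .inl (.ofAdd 1) := BS.toSemidirectProduct_a ..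
  have hker : f₁.ker ≤ Subgroup.zpowers (BS.a m (e * m)) := by
    rw [BS.ker_toCoprod, ← zpow_natCast]
    exact BS.normalClosure_a_zpow_le_zpowers_a hn
  have horder : ¬IsOfFinOrder (f₂ (BS.a m (e * m))) := by
    rw [hf₂a, SemidirectProduct.inl_injective.isOfFinOrder_iff]
    exact not_isOfFinOrder_of_isMulTorsionFree (by simp)
  refine ⟨f₁, f₂, BS.toCoprod_surjective _, BS.ker_toCoprod _, hf₂a,
    BS.toSemidirectProduct_b .., ?_⟩
  rw [← MonoidHom.ker_eq_bot_iff, MonoidHom.ker_prod, ← disjoint_iff]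
  exact (disjoint_zpowers_ker f₂ horder).mono_left hker
end

section
/- There is an injective group homomorphism from V × V into V, where V denotes Thompson's group V, the group of prefix replacement permutations of the Cantor set C = ℕ → Bool. -/
variable {α : Type*}

/-- The identification of pairs of a first letter and a tail with sequences. The pairs form a
sigma type, so that permutations of the tail may depend on the first letter as in
`Equiv.Perm.sigmaCongrRightHom`. -/
def consEquiv (α : Type*) : (Σ _ : α, ℕ → α) ≃ (ℕ → α) where
  toFun p n := n.casesOn p.1 p.2
  invFun ξ := ⟨ξ 0, fun n => ξ (n + 1)⟩
  left_inv _ := rfl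
  right_inv ξ := by
    funext n
    cases n <;> rfl

theorem prepend_cons (b : Bool) (w : List Bool) (ξ : Cantor) :
    prepend (b :: w) ξ = consEquiv Bool ⟨b, prepend w ξ⟩ := by
  funext n
  cases n <;> simp [prepend, consEquiv]

/-- The action of a family of permutations, one for each letter `a`, on sequences: the cylinder
of sequences starting with `a` is preserved, and `g a` acts on it through the tail. -/
def cylinderHom : (α → Equiv.Perm (ℕ → α)) →* Equiv.Perm (ℕ → α) :=
  (consEquiv α).permCongrHom.toMonoidHom.comp (Equiv.Perm.sigmaCongrRightHom fun _ => ℕ → α)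

theorem cylinderHom_injective :
    Function.Injective (cylinderHom : (α → Equiv.Perm (ℕ → α)) →* Equiv.Perm (ℕ → α)) :=
  (consEquiv α).permCongrHom.injective.comp Equiv.Perm.sigmaCongrRightHom_injective

theorem cylinderHom_apply_consEquiv (g : α → Equiv.Perm (ℕ → α)) (a : α) (ξ : ℕ → α) :
    cylinderHom g (consEquiv α ⟨a, ξ⟩) = consEquiv α ⟨a, g a ξ⟩ := rfl

/-- The set of words consisting of a letter `a` followed by a word of `A a`; for the binary
alphabet this is `0A₀ ∪ 1A₁`. -/
def graft (A : α → Set (List α)) : Set (List α) :=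
  ⋃ a, List.cons a '' A a

theorem mem_graft {A : α → Set (List α)} {l : List α} :
    l ∈ graft A ↔ ∃ a, ∃ w ∈ A a, a :: w = l :=
  Set.mem_iUnion

theorem cons_mem_graft {A : α → Set (List α)} {a : α} {w : List α} :
    a :: w ∈ graft A ↔ w ∈ A a := by
  simp [mem_graft]

theorem finite_graft [Finite α] {A : α → Set (List α)} (hA : ∀ a, (A a).Finite) :
    (graft A).Finite :=
  Set.finite_iUnion fun a => (hA a).image _

theorem isAntichain_prefix_graft {A : α → Set (List α)}
    (hA : ∀ a, IsAntichain (· <+: ·) (A a)) : IsAntichain (· <+: ·) (graft A) := by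
  intro l hl m hm hne hpre
  obtain ⟨a, w, hw, rfl⟩ := mem_graft.1 hl
  obtain ⟨b, v, hv, rfl⟩ := mem_graft.1 hm
  obtain ⟨rfl, hwv⟩ := List.cons_prefix_cons.1 hpre
  exact hA a hw hv (ne_of_apply_ne (List.cons a) hne) hwv

theorem exists_ofFn_mem_graft {A : α → Set (List α)}
    (hA : ∀ a (ξ : ℕ → α), ∃ n, (List.ofFn fun i : Fin n => ξ i) ∈ A a) (ξ : ℕ → α) :
    ∃ n, (List.ofFn fun i : Fin n => ξ i) ∈ graft A := by
  obtain ⟨n, hn⟩ := hA (ξ 0) fun i => ξ (i + 1)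
  refine ⟨n + 1, ?_⟩
  rw [List.ofFn_succ]
  exact cons_mem_graft.2 hn

theorem isCompleteAntichain_graft {A : Bool → Set (List Bool)}
    (hA : ∀ b, IsCompleteAntichain (A b)) : IsCompleteAntichain (graft A) :=
  ⟨finite_graft fun b => (hA b).1,
    isAntichain_prefix_graft fun b => (hA b).2.1,
    exists_ofFn_mem_graft fun b => (hA b).2.2⟩

/-- The decomposition of the words of `graft A` into first letter and remaining word, used to
transport bijections between the sets `A a` to bijections between grafts. -/
def graftEquiv (A : α → Set (List α)) : (Σ a, A a) ≃ graft A where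
  toFun p := ⟨p.1 :: p.2, cons_mem_graft.2 p.2.2⟩
  invFun
    | ⟨[], h⟩ => absurd h (by simp [mem_graft])
    | ⟨a :: w, h⟩ => ⟨a, w, cons_mem_graft.1 h⟩
  left_inv _ := rfl
  right_inv
    | ⟨[], h⟩ => absurd h (by simp [mem_graft])
    | ⟨_ :: _, _⟩ => rfl

theorem coe_graftEquiv (A : α → Set (List α)) (a : α) (w : A a) :
    (graftEquiv A ⟨a, w⟩ : List α) = a :: w := rfl

theorem isPrefixReplacement_cylinderHom {g : Bool → Equiv.Perm Cantor}
    (hg : ∀ b, IsPrefixReplacement (g b)) : IsPrefixReplacement (cylinderHom g) := by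
  choose A B hA hB σ hσ using hg
  refine ⟨graft A, graft B, isCompleteAntichain_graft hA, isCompleteAntichain_graft hB,
    (graftEquiv A).symm.trans ((Equiv.sigmaCongrRight σ).trans (graftEquiv B)), ?_⟩
  refine (graftEquiv A).forall_congr_right.1 ?_
  rintro ⟨b, w⟩ ξ
  calc cylinderHom g (prepend (graftEquiv A ⟨b, w⟩ : List Bool) ξ)
      = cylinderHom g (consEquiv Bool ⟨b, prepend w ξ⟩) := by rw [coe_graftEquiv, prepend_cons]
    _ = consEquiv Bool ⟨b, g b (prepend w ξ)⟩ := cylinderHom_apply_consEquiv g b _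
    _ = prepend (b :: σ b w) ξ := by rw [hσ, prepend_cons]
    _ = _ := by simp [coe_graftEquiv]

/-- There is an injective group homomorphism from `V × V` into `V`, where `V` is
Thompson's group `V`, the group of prefix replacement permutations of the Cantor set. -/
theorem V_times_V_embeds_in_V (V : Subgroup (Equiv.Perm Cantor))
    (hV : ∀ g : Equiv.Perm Cantor, g ∈ V ↔ IsPrefixReplacement g) :
    ∃ φ : V × V →* V, Function.Injective φ := by
  let pair : V × V →* (Bool → V) :=
    MonoidHom.pi fun b => bif b then MonoidHom.snd V V else MonoidHom.fst V V
  have pair_injective : Function.Injective pair := fun _ _ h =>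
    Prod.ext (congrFun h false) (congrFun h true)
  let act : (Bool → V) →* Equiv.Perm Cantor := cylinderHom.comp (V.subtype.compLeft Bool)
  have act_injective : Function.Injective act :=
    cylinderHom_injective.comp V.subtype_injective.comp_left
  have act_mem (g : Bool → V) : act g ∈ V :=
    (hV _).2 (isPrefixReplacement_cylinderHom fun b => (hV _).1 (g b).2)
  exact ⟨(act.codRestrict V act_mem).comp pair,
    (act_injective.codRestrict act_mem).comp pair_injective⟩
end
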